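/- Alignment Theorem, part 1 (existence of a bootstrapped-return representation): Suppose ⪰ is a binary relation on ℒ∞ and ⪰∂ is a binary relation on partial trajectories such that (Axiom 1) some reward function r* : S × A → ℝ expresses ⪰, and (Axiom 2) there exist a policy π and a transition matrix P with (π,P) unichain, together with a Markov prefix family (ℓ_h) for (π,P) with ℓ_h ∈ ℒ∞ for every partial trajectory h, such that for all partial trajectories h, h': h ⪰∂ h' iff ℓ_h ⪰ ℓ_{h'}. Then there exist functions r : S × A → ℝ and V : S → ℝ such that for all partial trajectories h, h': h ⪰∂ h' iff B(r,V)(h) ≥ B(r,V)(h'). -/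

import Mathlib

open MeasureTheory Filter Finset Topology

noncomputable section

/-- The trajectory space uses the discrete (⊤) σ-algebra on `S × A`. -/
instance discreteMS (S A : Type) : MeasurableSpace (S × A) := ⊤

variable {S A : Type} [Fintype S] [DecidableEq S] [Fintype A] [DecidableEq A]
  [Nonempty S] [Nonempty A]

/-- A policy assigns to each state a probability distribution over actions. -/
def IsPolicy (π : S → A → ℝ) : Prop :=
  (∀ s a, 0 ≤ π s a) ∧ ∀ s, ∑ a, π s a = 1

/-- A transition matrix assigns to each action and state a probability distribution
over next states. -/
def IsTransition (P : A → S → S → ℝ) : Prop :=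
  (∀ a s s', 0 ≤ P a s s') ∧ ∀ a s, ∑ s', P a s s' = 1

/-- The state-transition matrix induced by a policy and a transition matrix. -/
def Mmat (π : S → A → ℝ) (P : A → S → S → ℝ) : Matrix S S ℝ :=
  Matrix.of fun s s' => ∑ a, π s a * P a s s'

/-- `(π, P)` is unichain: for every `s'`, the Cesàro averages of `(M(π,P)^t)(s,s')`
converge to a limit `μ s'` that does not depend on `s`. -/
def Unichain (π : S → A → ℝ) (P : A → S → S → ℝ) : Prop :=
  ∃ μ : S → ℝ, ∀ s s',
    Tendsto (fun T : ℕ => (∑ t ∈ range T, (Mmat π P ^ t) s s') / (T : ℝ))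
      atTop (𝓝 (μ s'))

/-- The bootstrapped return of a partial trajectory `h = (pairs, z)`. -/
def Breturn (r : S × A → ℝ) (V : S → ℝ) (h : List (S × A) × S) : ℝ :=
  (h.1.map r).sum + V h.2

/-- Membership in `ℒ∞`: a probability measure on the trajectory space `ℕ → S × A`
such that for every state `s` the relative state frequencies converge. -/
def MemLinf (ℓ : Measure (ℕ → S × A)) : Prop :=
  IsProbabilityMeasure ℓ ∧
    ∀ s : S, ∃ c : ℝ,
      Tendsto (fun T : ℕ => (∑ t ∈ range T, (ℓ {ω | (ω t).1 = s}).toReal) / (T : ℝ))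
        atTop (𝓝 c)

/-- The expected discounted return `v(ℓ,r,γ)` of a lottery `ℓ`. -/
def vdisc (ℓ : Measure (ℕ → S × A)) (r : S × A → ℝ) (γ : ℝ) : ℝ :=
  ∑' t : ℕ, γ ^ t * ∫ ω, r (ω t) ∂ℓ

/-- A reward function `r` expresses the preference relation `pref` on `ℒ∞`:
`ℓ ⪰ ℓ'` iff `γ ↦ v(ℓ,r,γ) − v(ℓ',r,γ)` converges, as `γ → 1⁻`, to a limit `≥ 0`. -/
def Expresses (r : S × A → ℝ)
    (pref : Measure (ℕ → S × A) → Measure (ℕ → S × A) → Prop) : Prop :=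
  ∀ ℓ ℓ', MemLinf ℓ → MemLinf ℓ' →
    (pref ℓ ℓ' ↔ ∃ c : ℝ, 0 ≤ c ∧
      Tendsto (fun γ : ℝ => vdisc ℓ r γ - vdisc ℓ' r γ) (𝓝[<] (1 : ℝ)) (𝓝 c))

/-- A family `(ℓ_h)` of probability measures on the trajectory space, indexed by partial
trajectories, is a Markov prefix family for `(π,P)`: the measure of any cylinder set of
length `n ≥ T` is the indicator that the cylinder agrees with `h`, times
`π(x_T)(b_T) · ∏_{k=T}^{n−1} P(b_k)(x_k)(x_{k+1}) · π(x_{k+1})(b_{k+1})`. -/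
def IsMarkovPrefixFamily (π : S → A → ℝ) (P : A → S → S → ℝ)
    (L : List (S × A) × S → Measure (ℕ → S × A)) : Prop :=
  ∀ (l : List (S × A)) (z : S) (n : ℕ), l.length ≤ n → ∀ x : ℕ → S × A,
    (L (l, z) {ω | ∀ k ≤ n, ω k = x k}).toReal =
      (if (∀ t : Fin l.length, x t = l.get t) ∧ (x l.length).1 = z then (1 : ℝ) else 0) *
        (π (x l.length).1 (x l.length).2 *
          ∏ k ∈ Finset.Ico l.length n,
            (P (x k).2 (x k).1 (x (k + 1)).1 * π (x (k + 1)).1 (x (k + 1)).2))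

section Poisson

open Matrix

variable {n : Type*} [Fintype n] [DecidableEq n] {M : Matrix n n ℝ}

lemma abs_mulVec_le_sum_of_mem_rowStochastic (hM : M ∈ rowStochastic ℝ n) (f : n → ℝ) (z : n) :
    |(M *ᵥ f) z| ≤ ∑ s, |f s| := by
  refine (Finset.abs_sum_le_sum_abs _ _).trans (Finset.sum_le_sum fun s _ => ?_)
  rw [abs_mul, abs_of_nonneg (nonneg_of_mem_rowStochastic hM)]
  exact mul_le_of_le_one_left (abs_nonneg _) (le_one_of_mem_rowStochastic hM)

lemma pow_succ_mulVec (M : Matrix n n ℝ) (k : ℕ) (f : n → ℝ) :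
    M ^ (k + 1) *ᵥ f = M ^ k *ᵥ (M *ᵥ f) := by
  rw [pow_succ, mulVec_mulVec]

lemma tendsto_cesaro_mulVec {μ : n → ℝ}
    (hμ : ∀ s s', Tendsto (fun T : ℕ => (∑ t ∈ range T, (M ^ t) s s') / (T : ℝ))
      atTop (𝓝 (μ s'))) (f : n → ℝ) (z : n) :
    Tendsto (fun T : ℕ => (∑ t ∈ range T, (M ^ t *ᵥ f) z) / (T : ℝ)) atTop (𝓝 (μ ⬝ᵥ f)) := by
  have h := tendsto_finsetSum univ fun s _ => (hμ z s).mul_const (f s)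
  refine h.congr fun T => ?_
  simp only [mulVec, dotProduct]
  rw [Finset.sum_comm, Finset.sum_div]
  refine Finset.sum_congr rfl fun s _ => ?_
  rw [div_mul_eq_mul_div, Finset.sum_mul]

/-- If the Cesàro averages of the powers of a row-stochastic matrix converge to a matrix with
constant columns, then the Poisson equation is solvable for every right-hand side. -/
lemma exists_poisson_solution [Nonempty n] (hM : M ∈ rowStochastic ℝ n) {μ : n → ℝ}
    (hμ : ∀ s s', Tendsto (fun T : ℕ => (∑ t ∈ range T, (M ^ t) s s') / (T : ℝ))
      atTop (𝓝 (μ s'))) (f : n → ℝ) :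
    ∃ u : n → ℝ, μ ⬝ᵥ u = μ ⬝ᵥ f ∧ f = u - M *ᵥ u + fun _ => μ ⬝ᵥ f := by
  obtain ⟨z₀⟩ := ‹Nonempty n›
  have hces := tendsto_cesaro_mulVec hμ
  have hpos : ∀ᶠ T : ℕ in atTop, (T : ℝ) ≠ 0 := by
    filter_upwards [eventually_ne_atTop 0] with T hT using Nat.cast_ne_zero.2 hT
  have hfix : ∀ g : n → ℝ, M *ᵥ g = g → ∀ z, g z = μ ⬝ᵥ g := by
    intro g hg z
    have hpow : ∀ t, M ^ t *ᵥ g = g := by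
      intro t
      induction t with
      | zero => simp
      | succ t ih => rw [pow_succ_mulVec, hg, ih]
    refine tendsto_nhds_unique (tendsto_const_nhds.congr' ?_) (hces g z)
    filter_upwards [hpos] with T hT
    simp [hpow, hT]
  have hone : ∀ c : ℝ, μ ⬝ᵥ (fun _ => c) = c := by
    intro c
    refine (hfix (fun _ => c) ?_ z₀).symm
    ext z
    simp [mulVec, dotProduct, ← Finset.sum_mul, sum_row_of_mem_rowStochastic hM]
  have hinv : ∀ g : n → ℝ, μ ⬝ᵥ (M *ᵥ g) = μ ⬝ᵥ g := by
    intro g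
    have h0 : Tendsto (fun T : ℕ => ((M ^ T *ᵥ g) z₀ - g z₀) * (T : ℝ)⁻¹) atTop (𝓝 0) := by
      refine bdd_le_mul_tendsto_zero' (∑ s, |g s| + |g z₀|) (Eventually.of_forall fun T => ?_)
        tendsto_inv_atTop_nhds_zero_nat
      exact (abs_sub _ _).trans
        (add_le_add (abs_mulVec_le_sum_of_mem_rowStochastic (pow_mem hM T) g z₀) le_rfl)
    have h1 := (hces (M *ᵥ g) z₀).sub (hces g z₀)
    refine sub_eq_zero.1 (tendsto_nhds_unique h1 (h0.congr fun T => ?_))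
    rw [← sub_div, ← Finset.sum_sub_distrib, div_eq_mul_inv]
    congr 1
    simp_rw [← pow_succ_mulVec]
    rw [Finset.sum_range_sub (fun t => (M ^ t *ᵥ g) z₀)]
    simp
  let Φ : (n → ℝ) →ₗ[ℝ] (n → ℝ) :=
    { toFun := fun g => g - M *ᵥ g + fun _ => μ ⬝ᵥ g
      map_add' := by
        intro g h
        ext z
        simp only [mulVec_add, dotProduct_add, Pi.add_apply, Pi.sub_apply]
        ring
      map_smul' := by
        intro c g
        ext z
        simp only [mulVec_smul, dotProduct_smul, Pi.add_apply, Pi.sub_apply, Pi.smul_apply,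
          smul_eq_mul, RingHom.id_apply]
        ring }
  have hΦ : ∀ g, Φ g = g - M *ᵥ g + fun _ => μ ⬝ᵥ g := fun _ => rfl
  have hμΦ : ∀ g, μ ⬝ᵥ Φ g = μ ⬝ᵥ g := by
    intro g
    rw [hΦ, dotProduct_add, dotProduct_sub, hinv, hone]
    ring
  have hinj : Function.Injective Φ := by
    refine (injective_iff_map_eq_zero Φ).2 fun g hg => ?_
    have hq : μ ⬝ᵥ g = 0 := by rw [← hμΦ, hg, dotProduct_zero]
    have hMg : M *ᵥ g = g := by
      ext z
      have := congrFun hg z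
      simp only [hΦ, hq, Pi.add_apply, Pi.sub_apply, Pi.zero_apply] at this
      linarith
    ext z
    rw [hfix g hMg z, hq, Pi.zero_apply]
  obtain ⟨u, rfl⟩ := LinearMap.injective_iff_surjective.1 hinj f
  exact ⟨u, (hμΦ u).symm, by rw [hμΦ, hΦ]⟩

/-- The discounted sum of the expectations of `f` along the chain `M` started at `z`. -/
def discountedSum (M : Matrix n n ℝ) (f : n → ℝ) (γ : ℝ) (z : n) : ℝ :=
  ∑' k : ℕ, γ ^ k * (M ^ k *ᵥ f) z

lemma norm_discounted_term_le (hM : M ∈ rowStochastic ℝ n) (f : n → ℝ) {γ : ℝ} (h0 : 0 ≤ γ)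
    (z : n) (k : ℕ) : ‖γ ^ k * (M ^ k *ᵥ f) z‖ ≤ γ ^ k * ∑ s, |f s| := by
  rw [Real.norm_eq_abs, abs_mul, abs_of_nonneg (pow_nonneg h0 k)]
  exact mul_le_mul_of_nonneg_left
    (abs_mulVec_le_sum_of_mem_rowStochastic (pow_mem hM k) f z) (pow_nonneg h0 k)

lemma summable_discounted (hM : M ∈ rowStochastic ℝ n) (f : n → ℝ) {γ : ℝ} (h0 : 0 ≤ γ)
    (h1 : γ < 1) (z : n) : Summable fun k : ℕ => γ ^ k * (M ^ k *ᵥ f) z :=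
  Summable.of_norm_bounded ((summable_geometric_of_lt_one h0 h1).mul_right _)
    (norm_discounted_term_le hM f h0 z)

lemma abs_one_sub_mul_discountedSum_le (hM : M ∈ rowStochastic ℝ n) (f : n → ℝ) {γ : ℝ}
    (h0 : 0 ≤ γ) (h1 : γ < 1) (z : n) :
    |(1 - γ) * discountedSum M f γ z| ≤ ∑ s, |f s| := by
  have h := tsum_of_norm_bounded ((hasSum_geometric_of_lt_one h0 h1).mul_right (∑ s, |f s|))
    (norm_discounted_term_le hM f h0 z)
  have hγ : 0 < 1 - γ := sub_pos.2 h1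
  rw [abs_mul, abs_of_pos hγ]
  calc (1 - γ) * |discountedSum M f γ z|
      ≤ (1 - γ) * ((1 - γ)⁻¹ * ∑ s, |f s|) := mul_le_mul_of_nonneg_left h hγ.le
    _ = ∑ s, |f s| := by rw [mul_inv_cancel_left₀ hγ.ne']

lemma discountedSum_eq_add (hM : M ∈ rowStochastic ℝ n) (f : n → ℝ) {γ : ℝ} (h0 : 0 ≤ γ)
    (h1 : γ < 1) (z : n) :
    discountedSum M f γ z = f z + γ * discountedSum M (M *ᵥ f) γ z := by
  rw [discountedSum, (summable_discounted hM f h0 h1 z).tsum_eq_zero_add, discountedSum,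
    ← tsum_mul_left]
  simp only [pow_succ_mulVec, pow_zero, one_mul, one_mulVec, pow_succ' γ, mul_assoc]

lemma discountedSum_sub_mulVec (hM : M ∈ rowStochastic ℝ n) (f : n → ℝ) {γ : ℝ} (h0 : 0 ≤ γ)
    (h1 : γ < 1) (z : n) :
    discountedSum M (f - M *ᵥ f) γ z = f z - (1 - γ) * discountedSum M (M *ᵥ f) γ z := by
  have h : discountedSum M (f - M *ᵥ f) γ z =
      discountedSum M f γ z - discountedSum M (M *ᵥ f) γ z := by
    simp only [discountedSum, mulVec_sub, Pi.sub_apply, mul_sub]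
    exact (summable_discounted hM f h0 h1 z).tsum_sub (summable_discounted hM _ h0 h1 z)
  rw [h, discountedSum_eq_add hM f h0 h1 z]
  ring

/-- Laurent expansion of the discounted value at `γ = 1`, up to `o(1)`. -/
lemma exists_tendsto_discountedSum_sub [Nonempty n] (hM : M ∈ rowStochastic ℝ n) {μ : n → ℝ}
    (hμ : ∀ s s', Tendsto (fun T : ℕ => (∑ t ∈ range T, (M ^ t) s s') / (T : ℝ))
      atTop (𝓝 (μ s'))) (f : n → ℝ) :
    ∃ (ρ : ℝ) (u : n → ℝ), ∀ z,
      Tendsto (fun γ : ℝ => discountedSum M f γ z - ρ / (1 - γ)) (𝓝[<] 1) (𝓝 (u z)) := by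
  obtain ⟨u, hu, hfu⟩ := exists_poisson_solution hM hμ (f - fun _ => μ ⬝ᵥ f)
  set ρ := μ ⬝ᵥ f with hρ
  have hM1 : ∀ k : ℕ, M ^ k *ᵥ (fun _ => ρ) = fun _ => ρ := by
    intro k
    ext z
    simp [mulVec, dotProduct, ← Finset.sum_mul, sum_row_of_mem_rowStochastic (pow_mem hM k)]
  have hzero : μ ⬝ᵥ (f - fun _ => ρ) = 0 := by
    obtain ⟨z₀⟩ := ‹Nonempty n›
    have h := tendsto_cesaro_mulVec hμ (fun _ => ρ) z₀
    have h' : Tendsto (fun T : ℕ => (∑ t ∈ range T, (M ^ t *ᵥ fun _ => ρ) z₀) / (T : ℝ))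
        atTop (𝓝 ρ) := by
      refine tendsto_const_nhds.congr' ?_
      filter_upwards [eventually_ne_atTop 0] with T hT
      simp [hM1, hT]
    rw [dotProduct_sub, tendsto_nhds_unique h h', hρ, sub_self]
  rw [hzero] at hu hfu
  obtain ⟨w, -, hw⟩ := exists_poisson_solution hM hμ u
  rw [hu] at hw
  have hfu' : f - (fun _ => ρ) = u - M *ᵥ u := by
    rw [hfu]; ext z; simp
  have hw' : u = w - M *ᵥ w := by
    conv_lhs => rw [hw]
    ext z; simp
  refine ⟨ρ, u, fun z => ?_⟩
  have hev : ∀ᶠ γ : ℝ in 𝓝[<] 1, 0 ≤ γ ∧ γ < 1 := by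
    filter_upwards [Ioo_mem_nhdsLT (zero_lt_one' ℝ)] with γ h using ⟨h.1.le, h.2⟩
  have h1γ : Tendsto (fun γ : ℝ => 1 - γ) (𝓝[<] 1) (𝓝 0) := by
    have : Tendsto (fun γ : ℝ => 1 - γ) (𝓝 1) (𝓝 (1 - 1)) := tendsto_const_nhds.sub tendsto_id
    rw [sub_self] at this
    exact this.mono_left nhdsWithin_le_nhds
  have hMu : M *ᵥ u = M *ᵥ w - M *ᵥ (M *ᵥ w) := by
    conv_lhs => rw [hw', mulVec_sub]
  have hsmall : Tendsto (fun γ : ℝ => discountedSum M (M *ᵥ u) γ z * (1 - γ)) (𝓝[<] 1) (𝓝 0) := by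
    refine bdd_le_mul_tendsto_zero'
      (|(M *ᵥ w) z| + ∑ s, |(M *ᵥ (M *ᵥ w)) s|) ?_ h1γ
    filter_upwards [hev] with γ ⟨h0, h1⟩
    rw [hMu, discountedSum_sub_mulVec hM _ h0 h1]
    exact (abs_sub _ _).trans
      (add_le_add le_rfl (abs_one_sub_mul_discountedSum_le hM _ h0 h1 z))
  have hlim := hsmall.const_sub (u z)
  rw [sub_zero] at hlim
  refine hlim.congr' ?_
  filter_upwards [hev] with γ ⟨h0, h1⟩
  rw [mul_comm, ← discountedSum_sub_mulVec hM u h0 h1, ← hfu']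
  simp only [discountedSum, mulVec_sub, Pi.sub_apply, mul_sub, hM1]
  rw [(summable_discounted hM f h0 h1 z).tsum_sub
    ((summable_geometric_of_lt_one h0 h1).mul_right ρ), tsum_mul_right,
    tsum_geometric_of_lt_one h0 h1, div_eq_mul_inv, mul_comm ρ]

end Poisson

section MarkovPrefix

open Matrix

set_option linter.unusedSectionVars false

lemma Mmat_mem_rowStochastic {π : S → A → ℝ} {P : A → S → S → ℝ} (hπ : IsPolicy π)
    (hP : IsTransition P) : Mmat π P ∈ rowStochastic ℝ S := by
  refine mem_rowStochastic_iff_sum.2 ⟨fun s s' => ?_, fun s => ?_⟩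
  · exact Finset.sum_nonneg fun a _ => mul_nonneg (hπ.1 s a) (hP.1 a s s')
  · simp only [Mmat, of_apply]
    rw [Finset.sum_comm]
    simp [← Finset.mul_sum, hP.2, hπ.2]

instance : DiscreteMeasurableSpace (S × A) := ⟨fun _ => trivial⟩

lemma integral_eq_sum_cylinder {E : Type*} [Fintype E] [MeasurableSpace E]
    [DiscreteMeasurableSpace E] (ℓ : Measure (ℕ → E)) [IsProbabilityMeasure ℓ] (n : ℕ)
    (F : (Fin (n + 1) → E) → ℝ) :
    ∫ ω, F (fun i => ω i) ∂ℓ =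
      ∑ x : Fin (n + 1) → E, (ℓ {ω | ∀ i : Fin (n + 1), ω i = x i}).toReal * F x := by
  have hm : Measurable fun (ω : ℕ → E) (i : Fin (n + 1)) => ω i :=
    measurable_pi_lambda _ fun i => measurable_pi_apply _
  have : IsProbabilityMeasure (ℓ.map fun (ω : ℕ → E) (i : Fin (n + 1)) => ω i) :=
    Measure.isProbabilityMeasure_map hm.aemeasurable
  have hF : Measurable F := measurable_of_countable F
  rw [← integral_map hm.aemeasurable hF.aestronglyMeasurable, integral_fintype .of_finite]
  refine Finset.sum_congr rfl fun x _ => ?_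
  rw [map_measureReal_apply hm (measurableSet_singleton x), smul_eq_mul, measureReal_def]
  congr 4
  ext ω
  simp [funext_iff]

lemma cylinder_fin_eq {E : Type*} {n : ℕ} {x : Fin (n + 1) → E} {X : ℕ → E}
    (h : ∀ i : Fin (n + 1), X i = x i) :
    {ω : ℕ → E | ∀ i : Fin (n + 1), ω i = x i} = {ω | ∀ k ≤ n, ω k = X k} := by
  ext ω
  refine ⟨fun hω k hk => ?_, fun hω i => ?_⟩
  · rw [hω ⟨k, Nat.lt_succ_of_le hk⟩, ← h]
  · rw [← h, hω i (Nat.le_of_lt_succ i.2)]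

variable {π : S → A → ℝ} {P : A → S → S → ℝ} {L : List (S × A) × S → Measure (ℕ → S × A)}

/-- Extend a finite sequence to an infinite one by a constant tail. -/
def extendSnoc {E : Type*} {n : ℕ} (x : Fin n → E) (e : E) (k : ℕ) : E :=
  if h : k < n then x ⟨k, h⟩ else e

lemma extendSnoc_val {E : Type*} {n : ℕ} (x : Fin n → E) (e : E) (i : Fin n) :
    extendSnoc x e i = x i := by
  simp only [extendSnoc, i.2, dif_pos]

lemma extendSnoc_self {E : Type*} {n : ℕ} (x : Fin n → E) (e : E) : extendSnoc x e n = e := by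
  simp [extendSnoc]

lemma extendSnoc_eq_snoc {E : Type*} {n : ℕ} (x : Fin n → E) (e : E) (i : Fin (n + 1)) :
    extendSnoc x e i = Fin.snoc (α := fun _ => E) x e i := by
  refine Fin.lastCases ?_ (fun j => ?_) i
  · rw [Fin.snoc_last, Fin.val_last, extendSnoc_self]
  · rw [Fin.snoc_castSucc, Fin.val_castSucc, extendSnoc_val]

lemma IsMarkovPrefixFamily.measure_cylinder_snoc (hfam : IsMarkovPrefixFamily π P L)
    (l : List (S × A)) (z : S) (y : Fin l.length → S × A) (e : S × A) :
    (L (l, z) {ω | ∀ i : Fin (l.length + 1),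
      ω i = Fin.snoc (α := fun _ => S × A) y e i}).toReal =
      if y = l.get ∧ e.1 = z then π e.1 e.2 else 0 := by
  have h := hfam l z l.length le_rfl (extendSnoc y e)
  rw [← cylinder_fin_eq (extendSnoc_eq_snoc y e)] at h
  rw [h]
  simp only [extendSnoc_val, extendSnoc_self, Finset.Ico_self, Finset.prod_empty, mul_one,
    funext_iff, ite_mul, one_mul, zero_mul]

/-- A Markov prefix measure follows its prefix, then draws an action from `π`. -/
lemma IsMarkovPrefixFamily.integral_prefix (hfam : IsMarkovPrefixFamily π P L)
    (l : List (S × A)) (z : S) [IsProbabilityMeasure (L (l, z))]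
    (F : (Fin (l.length + 1) → S × A) → ℝ) :
    ∫ ω, F (fun i => ω i) ∂(L (l, z)) =
      ∑ b, π z b * F (Fin.snoc (α := fun _ => S × A) l.get (z, b)) := by
  rw [integral_eq_sum_cylinder, ← (Fin.snocEquiv fun _ => S × A).sum_comp, Fintype.sum_prod_type,
    Finset.sum_comm, Fintype.sum_eq_single l.get, Fintype.sum_prod_type, Fintype.sum_eq_single z]
  · refine Finset.sum_congr rfl fun b _ => ?_
    simp only [Fin.snocEquiv_apply, hfam.measure_cylinder_snoc]
    simp only [and_self, if_true]
    rfl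
  · intro s hs
    refine Finset.sum_eq_zero fun b _ => ?_
    simp only [Fin.snocEquiv_apply, hfam.measure_cylinder_snoc]
    simp [hs]
  · intro y hy
    refine Finset.sum_eq_zero fun e _ => ?_
    simp only [Fin.snocEquiv_apply, hfam.measure_cylinder_snoc]
    simp [hy]

lemma IsMarkovPrefixFamily.integral_succ (hfam : IsMarkovPrefixFamily π P L)
    (l : List (S × A)) (z : S) [IsProbabilityMeasure (L (l, z))] {n : ℕ} (hn : l.length ≤ n)
    (f : S × A → ℝ) :
    ∫ ω, f (ω (n + 1)) ∂(L (l, z)) =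
      ∫ ω, (∑ s, P (ω n).2 (ω n).1 s * ∑ b, π s b * f (s, b)) ∂(L (l, z)) := by
  have h1 := integral_eq_sum_cylinder (L (l, z)) (n + 1) fun x => f (x (Fin.last _))
  have h2 := integral_eq_sum_cylinder (L (l, z)) n fun x =>
    ∑ s, P (x (Fin.last _)).2 (x (Fin.last _)).1 s * ∑ b, π s b * f (s, b)
  simp only [Fin.val_last] at h1 h2
  rw [h1, h2, ← (Fin.snocEquiv fun _ => S × A).sum_comp, Fintype.sum_prod_type_right]
  refine Finset.sum_congr rfl fun x _ => ?_
  rw [Fintype.sum_prod_type, Finset.mul_sum]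
  refine Finset.sum_congr rfl fun s _ => ?_
  rw [← mul_assoc, Finset.mul_sum]
  refine Finset.sum_congr rfl fun b _ => ?_
  have hn1 := hfam l z n hn (extendSnoc x (s, b))
  have hn2 := hfam l z (n + 1) (hn.trans n.le_succ) (extendSnoc x (s, b))
  rw [← cylinder_fin_eq (extendSnoc_val x (s, b))] at hn1
  rw [← cylinder_fin_eq (extendSnoc_eq_snoc x (s, b)), Finset.prod_Ico_succ_top hn, ← mul_assoc,
    ← mul_assoc, mul_assoc _ (π _ _), ← hn1, extendSnoc_self,
    show extendSnoc x (s, b) n = x (Fin.last n) from extendSnoc_val x (s, b) (Fin.last n)] at hn2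
  simp only [Fin.snocEquiv_apply, Fin.snoc_last]
  rw [hn2]
  ring

lemma IsMarkovPrefixFamily.integral_add (hfam : IsMarkovPrefixFamily π P L)
    (l : List (S × A)) (z : S) [IsProbabilityMeasure (L (l, z))] (k : ℕ) (f : S × A → ℝ) :
    ∫ ω, f (ω (l.length + k)) ∂(L (l, z)) =
      (Mmat π P ^ k *ᵥ fun s => ∑ b, π s b * f (s, b)) z := by
  induction k generalizing f with
  | zero =>
    have h := hfam.integral_prefix l z fun x => f (x (Fin.last _))
    simpa using h
  | succ k ih =>
    rw [← add_assoc, hfam.integral_succ l z (Nat.le_add_right _ _),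
      ih fun e => ∑ s, P e.2 e.1 s * ∑ b, π s b * f (s, b), pow_succ_mulVec]
    congr 2
    ext s
    simp only [mulVec, dotProduct, Mmat, of_apply, Finset.mul_sum, Finset.sum_mul]
    rw [Finset.sum_comm]
    simp only [mul_assoc]
    refine Finset.sum_congr rfl fun s' _ => ?_
    rw [Finset.sum_comm]

lemma IsMarkovPrefixFamily.integral_of_lt (hfam : IsMarkovPrefixFamily π P L)
    (hπ : IsPolicy π) (l : List (S × A)) (z : S) [IsProbabilityMeasure (L (l, z))]
    (t : Fin l.length) (f : S × A → ℝ) :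
    ∫ ω, f (ω t) ∂(L (l, z)) = f (l.get t) := by
  have h := hfam.integral_prefix l z fun x => f (x t.castSucc)
  simp only [Fin.snoc_castSucc, Fin.val_castSucc, ← Finset.sum_mul, hπ.2, one_mul] at h
  exact h

lemma IsMarkovPrefixFamily.vdisc_eq (hfam : IsMarkovPrefixFamily π P L)
    (hπ : IsPolicy π) (hP : IsTransition P) (l : List (S × A)) (z : S)
    [IsProbabilityMeasure (L (l, z))] (r : S × A → ℝ) {γ : ℝ} (h0 : 0 ≤ γ) (h1 : γ < 1) :
    vdisc (L (l, z)) r γ = ∑ t : Fin l.length, γ ^ (t : ℕ) * r (l.get t) +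
      γ ^ l.length * discountedSum (Mmat π P) (fun s => ∑ b, π s b * r (s, b)) γ z := by
  have htail : (fun k : ℕ => γ ^ (k + l.length) * ∫ ω, r (ω (k + l.length)) ∂(L (l, z))) =
      fun k => γ ^ l.length *
        (γ ^ k * (Mmat π P ^ k *ᵥ fun s => ∑ b, π s b * r (s, b)) z) := by
    ext k
    rw [add_comm k, hfam.integral_add, pow_add, mul_assoc]
  have hs := (summable_discounted (Mmat_mem_rowStochastic hπ hP)
    (fun s => ∑ b, π s b * r (s, b)) h0 h1 z).mul_left (γ ^ l.length)
  rw [← htail] at hs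
  have hsplit := Summable.sum_add_tsum_nat_add l.length ((summable_nat_add_iff
    (f := fun t : ℕ => γ ^ t * ∫ ω, r (ω t) ∂(L (l, z))) l.length).1 hs)
  rw [vdisc, ← hsplit, htail, tsum_mul_left, Finset.sum_range, discountedSum]
  simp only [hfam.integral_of_lt hπ]

lemma tendsto_vdisc_sub (hfam : IsMarkovPrefixFamily π P L)
    (hπ : IsPolicy π) (hP : IsTransition P) {r : S × A → ℝ} {ρ : ℝ} {u : S → ℝ}
    (hu : ∀ z, Tendsto (fun γ : ℝ =>
      discountedSum (Mmat π P) (fun s => ∑ b, π s b * r (s, b)) γ z - ρ / (1 - γ))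
      (𝓝[<] 1) (𝓝 (u z)))
    (h : List (S × A) × S) [IsProbabilityMeasure (L h)] :
    Tendsto (fun γ : ℝ => vdisc (L h) r γ - ρ / (1 - γ)) (𝓝[<] 1)
      (𝓝 (Breturn (fun e => r e - ρ) u h)) := by
  obtain ⟨l, z⟩ := h
  have hpow : ∀ k : ℕ, Tendsto (fun γ : ℝ => γ ^ k) (𝓝[<] 1) (𝓝 1) := fun k => by
    have := ((continuous_pow k).tendsto (1 : ℝ)).mono_left (nhdsWithin_le_nhds (s := Set.Iio 1))
    simpa using this
  have hsum := tendsto_finsetSum univ fun (t : Fin l.length) _ =>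
    (hpow t).mul_const (r (l.get t) - ρ)
  have hlim := hsum.add ((hpow l.length).mul (hu z))
  have hB : ∑ t : Fin l.length, 1 * (r (l.get t) - ρ) + 1 * u z =
      Breturn (fun e => r e - ρ) u (l, z) := by
    simp only [one_mul, Breturn]
    rw [← List.sum_ofFn]
    congr 2
    conv_rhs => rw [← List.ofFn_get l, List.map_ofFn]
    rfl
  rw [hB] at hlim
  refine hlim.congr' ?_
  filter_upwards [Ioo_mem_nhdsLT (zero_lt_one' ℝ)] with γ hγ
  rw [hfam.vdisc_eq hπ hP l z r hγ.1.le hγ.2]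
  have hgeom : ∑ t : Fin l.length, γ ^ (t : ℕ) = (1 - γ ^ l.length) / (1 - γ) := by
    rw [← Finset.sum_range fun t => γ ^ t, eq_div_iff (sub_pos.2 hγ.2).ne', geom_sum_mul_neg]
  simp only [mul_sub, Finset.sum_sub_distrib, ← Finset.sum_mul, hgeom]
  ring

end MarkovPrefix

/-- **Alignment Theorem, part 1 (existence of a bootstrapped-return representation).**
Under Axiom 1 (some reward `r*` expresses `⪰`) and Axiom 2 (a unichain pair `(π,P)` and a
Markov prefix family `(ℓ_h) ⊆ ℒ∞` with `h ⪰∂ h' ↔ ℓ_h ⪰ ℓ_{h'}`), there exist `r` and `V`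
such that for all partial trajectories `h, h'`: `h ⪰∂ h' ↔ B(r,V)(h) ≥ B(r,V)(h')`. -/
theorem alignment_theorem_part1
    (pref : Measure (ℕ → S × A) → Measure (ℕ → S × A) → Prop)
    (prefP : List (S × A) × S → List (S × A) × S → Prop)
    (rstar : S × A → ℝ) (hax1 : Expresses rstar pref)
    (π : S → A → ℝ) (P : A → S → S → ℝ)
    (hπ : IsPolicy π) (hP : IsTransition P)
    (huni : Unichain π P)
    (L : List (S × A) × S → Measure (ℕ → S × A))
    (hfam : IsMarkovPrefixFamily π P L)
    (hmem : ∀ h, MemLinf (L h))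
    (hax2 : ∀ h h', prefP h h' ↔ pref (L h) (L h')) :
    ∃ (r : S × A → ℝ) (V : S → ℝ),
      ∀ h h', prefP h h' ↔ Breturn r V h' ≤ Breturn r V h := by
  obtain ⟨μ, hμ⟩ := huni
  obtain ⟨ρ, u, hu⟩ := exists_tendsto_discountedSum_sub (Mmat_mem_rowStochastic hπ hP) hμ
    fun s => ∑ b, π s b * rstar (s, b)
  refine ⟨fun e => rstar e - ρ, u, fun h h' => ?_⟩
  have hlim : Tendsto (fun γ : ℝ => vdisc (L h) rstar γ - vdisc (L h') rstar γ) (𝓝[<] 1)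
      (𝓝 (Breturn (fun e => rstar e - ρ) u h - Breturn (fun e => rstar e - ρ) u h')) := by
    have := (hmem h).1
    have := (hmem h').1
    refine ((tendsto_vdisc_sub hfam hπ hP hu h).sub
      (tendsto_vdisc_sub hfam hπ hP hu h')).congr fun γ => ?_
    ring
  rw [hax2, hax1 _ _ (hmem h) (hmem h'), ← sub_nonneg]
  refine ⟨fun ⟨c, hc, hc'⟩ => ?_, fun hc => ⟨_, hc, hlim⟩⟩
  rwa [tendsto_nhds_unique hlim hc']
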